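/- arXiv:2003.12706 — 2 statements merged into one kernel-verified Lean document; each statement's English description precedes it below -/
import Mathlib

section
/- For 0<|q|<1, with k = q·R(q)·R(q^2)^2 where R(q) = (q, q^4; q^5)_∞/(q^2, q^3; q^5)_∞, and ψ(q) = ∑_{n≥0} q^{n(n+1)/2}, one has ψ(q)^2/(q·ψ(q^5)^2) = (1 + k − k^2)/k. -/
/-!
Write `Jᵢ = (qⁱ, q^(10-i), q^10; q^10)_∞`. Splitting the factors modulo 10 gives
`k = q J₁ J₂ / (J₃ J₄)`, and Gauss's product `ψ(q) = (q²; q²)_∞ / (q; q²)_∞` (`psi_product`) gives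
`ψ(q) / ψ(q⁵) = J₂ J₄ / (J₁ J₃)`. The identity therefore follows from

* `rel_one`: `J₂² J₄² - q J₁² J₃² = J₁ J₃ J₅²`, i.e. `ψ(q)² / (q ψ(q⁵)²) = 1 + J₅² / (q J₁ J₃)`;
* `rel_two`: `J₃² J₄² - q² J₁² J₂² = J₂ J₄ J₅²`, i.e. `1 / k - k = J₅² / (q J₁ J₃)`.

Both are instances of Weierstrass's three-term relation for theta functions (`J_three_term`). By the
Jacobi triple product (`jtp`), `Jᵢ` is a theta series `J (q⁵) (qⁱ)`. Sorting the terms of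
`J(xy) J(x/y)` by parity writes this product as `x` times the `2 × 2` determinant formed by the odd
and even theta series at `x` and `y` (`J_mul`), so that the three-term relation is the Plücker
relation between such determinants. The triple product itself is the limit of the finite
`q`-binomial theorem.
-/

noncomputable def qp (a q : ℂ) : ℂ := ∏' k : ℕ, (1 - a * q ^ k)

noncomputable def GG (q : ℂ) : ℂ := 1 / (qp q (q ^ 5) * qp (q ^ 4) (q ^ 5))

noncomputable def HH (q : ℂ) : ℂ := 1 / (qp (q ^ 2) (q ^ 5) * qp (q ^ 3) (q ^ 5))

noncomputable def RR (q : ℂ) : ℂ :=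
  (qp q (q ^ 5) * qp (q ^ 4) (q ^ 5)) / (qp (q ^ 2) (q ^ 5) * qp (q ^ 3) (q ^ 5))

noncomputable def phi (q : ℂ) : ℂ := ∑' n : ℤ, q ^ (n.natAbs ^ 2)

noncomputable def psi (q : ℂ) : ℂ := ∑' n : ℕ, q ^ (n * (n + 1) / 2)

open Finset Filter Topology

/-! ### Infinite products -/

lemma norm_pow_lt_one {q : ℂ} (hq : ‖q‖ < 1) {n : ℕ} (hn : n ≠ 0) : ‖q ^ n‖ < 1 := by
  rw [norm_pow]
  exact pow_lt_one₀ (norm_nonneg q) hq hn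

lemma qp_summable {p : ℂ} (hp : ‖p‖ < 1) (a : ℂ) : Summable fun k : ℕ => ‖-(a * p ^ k)‖ := by
  simp only [norm_neg, norm_mul, norm_pow]
  exact (summable_geometric_of_lt_one (norm_nonneg p) hp).mul_left _

lemma qp_multipliable {p : ℂ} (hp : ‖p‖ < 1) (a : ℂ) :
    Multipliable fun k : ℕ => 1 - a * p ^ k := by
  simpa only [sub_eq_add_neg] using multipliable_one_add_of_summable (qp_summable hp a)

lemma qp_tendsto {p : ℂ} (hp : ‖p‖ < 1) (a : ℂ) :
    Tendsto (fun n => ∏ k ∈ range n, (1 - a * p ^ k)) atTop (𝓝 (qp a p)) :=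
  (qp_multipliable hp a).tendsto_prod_tprod_nat

lemma one_sub_ne_zero {a p : ℂ} (hp : ‖p‖ < 1) (ha : ‖a‖ < 1) (k : ℕ) : 1 - a * p ^ k ≠ 0 := by
  intro h
  have h1 : ‖a * p ^ k‖ = 1 := by rw [← sub_eq_zero.1 h, norm_one]
  rw [norm_mul, norm_pow] at h1
  have h2 : ‖p‖ ^ k ≤ 1 := pow_le_one₀ (norm_nonneg p) hp.le
  nlinarith [norm_nonneg a, norm_nonneg p, pow_nonneg (norm_nonneg p) k]

lemma qp_ne_zero {a p : ℂ} (hp : ‖p‖ < 1) (ha : ‖a‖ < 1) : qp a p ≠ 0 := by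
  have := tprod_one_add_ne_zero_of_summable (f := fun k : ℕ => -(a * p ^ k))
    (fun k => by simpa only [← sub_eq_add_neg] using one_sub_ne_zero hp ha k) (qp_summable hp a)
  simpa only [qp, ← sub_eq_add_neg] using this

lemma qp_two {p : ℂ} (hp : ‖p‖ < 1) (a : ℂ) : qp a p = qp a (p ^ 2) * qp (a * p) (p ^ 2) := by
  have h2 := norm_pow_lt_one hp two_ne_zero
  refine tendsto_nhds_unique ((qp_tendsto hp a).comp (tendsto_id.const_mul_atTop' two_pos)) ?_
  refine ((qp_tendsto h2 a).mul (qp_tendsto h2 (a * p))).congr fun n => ?_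
  induction n with
  | zero => simp
  | succ n ih =>
    simp only [Function.comp_apply, id] at ih ⊢
    rw [show 2 * (n + 1) = 2 * n + 1 + 1 by ring]
    simp only [prod_range_succ, ← ih]
    ring

lemma qp_five {p : ℂ} (hp : ‖p‖ < 1) (a : ℂ) :
    qp a p = qp a (p ^ 5) * qp (a * p) (p ^ 5) * qp (a * p ^ 2) (p ^ 5) *
      qp (a * p ^ 3) (p ^ 5) * qp (a * p ^ 4) (p ^ 5) := by
  have h5 := norm_pow_lt_one hp (n := 5) (by norm_num)
  refine tendsto_nhds_unique
    ((qp_tendsto hp a).comp (tendsto_id.const_mul_atTop' (by norm_num : 0 < 5))) ?_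
  refine (((((qp_tendsto h5 a).mul (qp_tendsto h5 (a * p))).mul (qp_tendsto h5 (a * p ^ 2))).mul
    (qp_tendsto h5 (a * p ^ 3))).mul (qp_tendsto h5 (a * p ^ 4))).congr fun n => ?_
  induction n with
  | zero => simp
  | succ n ih =>
    simp only [Function.comp_apply, id] at ih ⊢
    rw [show 5 * (n + 1) = 5 * n + 1 + 1 + 1 + 1 + 1 by ring]
    simp only [prod_range_succ, ← ih]
    ring

lemma qp_mul_qp_neg {p : ℂ} (hp : ‖p‖ < 1) (a : ℂ) : qp a p * qp (-a) p = qp (a ^ 2) (p ^ 2) := by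
  refine tendsto_nhds_unique ((qp_tendsto hp a).mul (qp_tendsto hp (-a))) ?_
  refine (qp_tendsto (norm_pow_lt_one hp two_ne_zero) (a ^ 2)).congr fun n => ?_
  rw [← prod_mul_distrib]
  exact prod_congr rfl fun k _ => by ring

/-! ### The Jacobi triple product -/

/-- The finite `p`-factorial `(p; p)_n`. -/
noncomputable def qf (p : ℂ) (n : ℕ) : ℂ := ∏ k ∈ range n, (1 - p * p ^ k)

lemma qf_ne_zero {p : ℂ} (hp : ‖p‖ < 1) (n : ℕ) : qf p n ≠ 0 :=
  prod_ne_zero_iff.2 fun k _ => one_sub_ne_zero hp hp k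

lemma qf_succ (p : ℂ) (n : ℕ) : qf p (n + 1) = qf p n * (1 - p * p ^ n) := prod_range_succ _ _

/-- The Gaussian binomial coefficient, extended by zero to `k > N`. -/
noncomputable def gb (p : ℂ) (N k : ℕ) : ℂ :=
  if k ≤ N then qf p N / (qf p k * qf p (N - k)) else 0

lemma gb_pascal {p : ℂ} (hp : ‖p‖ < 1) (N k : ℕ) (hk : k ≤ N) :
    gb p (N + 1) (k + 1) = gb p N (k + 1) + p ^ (N - k) * gb p N k := by
  obtain ⟨m, rfl⟩ := Nat.exists_eq_add_of_le hk
  have h1 := qf_ne_zero hp (k + 1)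
  have h2 := qf_ne_zero hp k
  have h3 := qf_ne_zero hp m
  have h0 := one_sub_ne_zero hp hp k
  unfold gb
  rcases m with _ | m
  · have h3' : qf p 0 = 1 := by simp [qf]
    rw [if_pos (by omega), if_neg (by omega), if_pos (by omega)]
    simp [h3', h1, h2]
  · have e1 : k + (m + 1) + 1 - (k + 1) = m + 1 := by omega
    have e2 : k + (m + 1) - (k + 1) = m := by omega
    have e3 : k + (m + 1) - k = m + 1 := by omega
    rw [if_pos (by omega), if_pos (by omega), if_pos (by omega), e1, e2, e3, qf_succ p (_ + _),
      qf_succ p k, qf_succ p m]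
    have h4 := qf_ne_zero hp m
    have h5 := one_sub_ne_zero hp hp m
    field_simp
    ring

/-- The finite `q`-binomial theorem with base `t²`. -/
lemma q_binomial {t : ℂ} (ht0 : t ≠ 0) (ht : ‖t ^ 2‖ < 1) (z : ℂ) (N : ℕ) :
    ∏ k ∈ range N, (1 - z * (t ^ 2) ^ k) =
      ∑ k ∈ range (N + 1), gb (t ^ 2) N k * (t ^ ((k : ℤ) * k - k) * (-z) ^ k) := by
  induction N with
  | zero => simp [gb, qf]
  | succ N ih =>
    have hz : ∀ N, gb (t ^ 2) N 0 = 1 := fun N => by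
      have := qf_ne_zero ht N
      have h0 : qf (t ^ 2) 0 = 1 := by simp [qf]
      simp [gb, h0, this]
    have hN : gb (t ^ 2) N (N + 1) = 0 := by simp [gb]
    have hs : ∑ k ∈ range (N + 1), gb (t ^ 2) N k * (t ^ ((k : ℤ) * k - k) * (-z) ^ k) =
        1 + ∑ k ∈ range (N + 1),
          gb (t ^ 2) N (k + 1) * (t ^ (((k + 1 : ℕ) : ℤ) * (k + 1 : ℕ) - (k + 1 : ℕ)) *
            (-z) ^ (k + 1)) := by
      rw [sum_range_succ', sum_range_succ _ N, hN, hz]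
      simp [add_comm]
    rw [prod_range_succ, ih, mul_sub, mul_one]
    nth_rw 1 [hs]
    rw [sum_range_succ' _ (N + 1), hz, sum_mul, add_sub_assoc, ← sum_sub_distrib, add_comm]
    congr 1
    · refine sum_congr rfl fun k hk => ?_
      have hk' : k ≤ N := by simpa [Nat.lt_succ_iff] using hk
      rw [gb_pascal ht N k hk', add_mul, sub_eq_add_neg]
      congr 1
      have e : t ^ (((k + 1 : ℕ) : ℤ) * (k + 1 : ℕ) - (k + 1 : ℕ)) =
          t ^ ((k : ℤ) * k - k) * (t ^ 2) ^ k := by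
        rw [← pow_mul, ← zpow_natCast t, ← zpow_add₀ ht0]
        congr 1; push_cast; ring
      have e2 : (t ^ 2) ^ N = (t ^ 2) ^ (N - k) * (t ^ 2) ^ k := by
        rw [← pow_add, Nat.sub_add_cancel hk']
      rw [e, e2]
      ring
    · simp

/-- The finite triple product: the `q`-binomial theorem for `2n` factors, with `z` replaced by
`z t^(-2n)`. -/
lemma finite_jtp {t z : ℂ} (ht0 : t ≠ 0) (hz : z ≠ 0) (ht : ‖t ^ 2‖ < 1) (n : ℕ) :
    (∏ k ∈ range n, (1 - z * (t ^ 2) ^ k)) * ∏ k ∈ range n, (1 - t ^ 2 / z * (t ^ 2) ^ k) =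
      ∑ k ∈ range (2 * n + 1), gb (t ^ 2) (2 * n) k *
        (t ^ (((k : ℤ) - n) * (k - n) - (k - n)) * (-z) ^ ((k : ℤ) - n)) := by
  have hz' : -z ≠ 0 := neg_ne_zero.2 hz
  have key := q_binomial ht0 ht (z * t ^ (-(2 * n : ℤ))) (2 * n)
  -- the first `n` factors, reversed, are multiples of the factors `1 - t² / z * (t²) ^ k`
  have hrev : ∏ k ∈ range n, (1 - z * t ^ (-(2 * n : ℤ)) * (t ^ 2) ^ k) =
      (-z) ^ (n : ℤ) * t ^ (-((n : ℤ) * n + n)) * ∏ k ∈ range n, (1 - t ^ 2 / z * (t ^ 2) ^ k) := by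
    have h1 : ∏ k ∈ range n, (1 - z * t ^ (-(2 * n : ℤ)) * (t ^ 2) ^ k) =
        ∏ k ∈ range n, ((-z) * t ^ (-(2 * (k + 1) : ℤ)) * (1 - t ^ 2 / z * (t ^ 2) ^ k)) := by
      rw [← prod_range_reflect]
      refine prod_congr rfl fun k hk => ?_
      have hk' : k < n := by simpa using hk
      have e : t ^ (-(2 * n : ℤ)) * (t ^ 2) ^ (n - 1 - k) = t ^ (-(2 * (k + 1) : ℤ)) := by
        rw [← pow_mul, ← zpow_natCast t, ← zpow_add₀ ht0]
        congr 1
        rw [Nat.cast_mul, Nat.sub_sub, Nat.cast_sub (by omega)]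
        push_cast; ring
      have e2 : t ^ (-(2 * (k + 1) : ℤ)) * (t ^ 2 * (t ^ 2) ^ k) = 1 := by
        rw [← pow_succ', ← pow_mul, ← zpow_natCast t, ← zpow_add₀ ht0]
        rw [show (-(2 * (k + 1) : ℤ)) + ((2 * (k + 1) : ℕ) : ℤ) = 0 by push_cast; ring, zpow_zero]
      rw [mul_assoc z, e]
      field_simp
      linear_combination -e2
    rw [h1, prod_mul_distrib]
    congr 1
    clear h1 key
    induction n with
    | zero => simp
    | succ n ih =>
      rw [prod_range_succ, ih]
      have : (-z) ^ ((n + 1 : ℕ) : ℤ) = (-z) ^ (n : ℤ) * (-z) := by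
        rw [zpow_natCast, zpow_natCast, pow_succ]
      have h2 : t ^ (-(((n + 1 : ℕ) : ℤ) * (n + 1 : ℕ) + (n + 1 : ℕ))) =
          t ^ (-((n : ℤ) * n + n)) * t ^ (-(2 * (n + 1) : ℤ)) := by
        rw [← zpow_add₀ ht0]; congr 1; push_cast; ring
      rw [this, h2]
      ring
  have hfst : ∀ k, 1 - z * t ^ (-(2 * n : ℤ)) * (t ^ 2) ^ (n + k) = 1 - z * (t ^ 2) ^ k := by
    intro k
    have e : t ^ (-(2 * n : ℤ)) * (t ^ 2) ^ (n + k) = (t ^ 2) ^ k := by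
      rw [← pow_mul, ← pow_mul, ← zpow_natCast t, ← zpow_natCast t, ← zpow_add₀ ht0]
      congr 1; push_cast; ring
    rw [mul_assoc, e]
  rw [show 2 * n = n + n by ring, prod_range_add] at key
  simp only [hfst, hrev] at key
  have hc : (-z) ^ (n : ℤ) * t ^ (-((n : ℤ) * n + n)) ≠ 0 :=
    mul_ne_zero (zpow_ne_zero _ hz') (zpow_ne_zero _ ht0)
  refine mul_left_cancel₀ hc ?_
  rw [show 2 * n = n + n by ring, mul_sum]
  rw [show ∀ a b c d : ℂ, a * b * (c * d) = a * b * d * c by intros; ring, key]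
  refine sum_congr rfl fun k _ => ?_
  have e1 : (-(z * t ^ (-(2 * n : ℤ)))) ^ k = (-z) ^ (k : ℤ) * t ^ (-(2 * n * k : ℤ)) := by
    rw [neg_mul_eq_neg_mul, mul_pow, zpow_natCast, ← zpow_natCast (t ^ _), ← zpow_mul]
    congr 2; ring
  have e2 : (-z) ^ (k : ℤ) = (-z) ^ (n : ℤ) * (-z) ^ ((k : ℤ) - n) := by
    rw [← zpow_add₀ hz']; congr 1; ring
  have e3 : t ^ ((k : ℤ) * k - k) * t ^ (-(2 * n * k : ℤ)) =
      t ^ (-((n : ℤ) * n + n)) * t ^ (((k : ℤ) - n) * (k - n) - (k - n)) := by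
    rw [← zpow_add₀ ht0, ← zpow_add₀ ht0]; congr 1; ring
  rw [e1, e2]
  linear_combination (gb (t ^ 2) (n + n) k * (-z) ^ (n : ℤ) * (-z) ^ ((k : ℤ) - n)) * e3

/-- The theta series `∑ₙ (-1)ⁿ t^(n² - n) zⁿ`; its nome is `t²`, which keeps all exponents
integral. -/
noncomputable def J (t z : ℂ) : ℂ := ∑' n : ℤ, t ^ (n * n - n) * (-z) ^ n

/-- Convergence of the theta series, from that of `jacobiTheta₂` at `t = exp (πiτ)` and
`w = exp (2πiζ)`. -/
lemma summable_theta {t w : ℂ} (ht0 : t ≠ 0) (ht : ‖t‖ < 1) (hw : w ≠ 0) :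
    Summable fun n : ℤ => t ^ (n * n) * w ^ n := by
  have hpi : (Real.pi : ℂ) ≠ 0 := by exact_mod_cast Real.pi_ne_zero
  have hI := Complex.I_ne_zero
  have h := (summable_jacobiTheta₂_term_iff (Complex.log w / (2 * Real.pi * Complex.I))
    (Complex.log t / (Real.pi * Complex.I))).2 (by
      have e : Complex.log t / (Real.pi * Complex.I) =
          -(Complex.I * (Complex.log t * ((Real.pi⁻¹ : ℝ) : ℂ))) := by
        push_cast
        field_simp
        rw [Complex.I_sq]; ring
      rw [e, Complex.neg_im, Complex.I_mul_im, Complex.re_mul_ofReal, Complex.log_re, ← neg_mul]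
      exact mul_pos (neg_pos.2 (Real.log_neg (norm_pos_iff.2 ht0) ht)) (inv_pos.2 Real.pi_pos))
  refine h.congr fun n => ?_
  rw [jacobiTheta₂_term]
  have e : 2 * Real.pi * Complex.I * n * (Complex.log w / (2 * Real.pi * Complex.I)) +
      Real.pi * Complex.I * n ^ 2 * (Complex.log t / (Real.pi * Complex.I)) =
      ((n * n : ℤ) : ℂ) * Complex.log t + n * Complex.log w := by
    push_cast
    field_simp
    ring
  rw [e, Complex.exp_add, Complex.exp_int_mul, Complex.exp_int_mul, Complex.exp_log ht0,
    Complex.exp_log hw]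

lemma J_summable {t z : ℂ} (ht0 : t ≠ 0) (ht : ‖t‖ < 1) (hz : z ≠ 0) :
    Summable fun n : ℤ => t ^ (n * n - n) * (-z) ^ n := by
  refine (summable_theta ht0 ht (div_ne_zero (neg_ne_zero.2 hz) ht0)).congr fun n => ?_
  rw [div_zpow, zpow_sub₀ ht0]
  ring

/-- The coefficient of `(-z)ʲ t^(j² - j)` in the `n`-th partial triple product. -/
noncomputable def cc (p : ℂ) (n : ℕ) (j : ℤ) : ℂ :=
  if -(n : ℤ) ≤ j ∧ j ≤ n then qf p (2 * n) / (qf p (j + n).toNat * qf p (n - j).toNat) else 0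

lemma finite_jtp_tsum {t z : ℂ} (ht0 : t ≠ 0) (hz : z ≠ 0) (ht : ‖t ^ 2‖ < 1) (n : ℕ) :
    (∏ k ∈ range n, (1 - z * (t ^ 2) ^ k)) * ∏ k ∈ range n, (1 - t ^ 2 / z * (t ^ 2) ^ k) =
      ∑' j : ℤ, cc (t ^ 2) n j * (t ^ (j * j - j) * (-z) ^ j) := by
  rw [finite_jtp ht0 hz ht, tsum_eq_sum (s := (range (2 * n + 1)).image fun k : ℕ => (k : ℤ) - n),
    sum_image]
  · refine sum_congr rfl fun k hk => ?_
    have hk' : k ≤ 2 * n := by simpa [Nat.lt_succ_iff] using hk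
    rw [gb, cc, if_pos hk', if_pos (by omega)]
    congr 5 <;> omega
  · intro a _ b _ h
    simpa using h
  · intro j hj
    rw [cc, if_neg, zero_mul]
    rintro ⟨h1, h2⟩
    exact hj (mem_image.2 ⟨(j + n).toNat, by simp; omega, by omega⟩)

lemma cc_tendsto {p : ℂ} (hp : ‖p‖ < 1) (j : ℤ) :
    Tendsto (fun n => cc p n j) atTop (𝓝 (qp p p)⁻¹) := by
  have hq : Tendsto (qf p) atTop (𝓝 (qp p p)) := qp_tendsto hp p
  have h0 := qp_ne_zero hp hp
  have l1 : Tendsto (fun n : ℕ => (j + n).toNat) atTop atTop :=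
    tendsto_atTop.2 fun b => eventually_atTop.2 ⟨b + j.natAbs, fun n hn => by omega⟩
  have l2 : Tendsto (fun n : ℕ => (n - j).toNat) atTop atTop :=
    tendsto_atTop.2 fun b => eventually_atTop.2 ⟨b + j.natAbs, fun n hn => by omega⟩
  have l3 : Tendsto (fun n : ℕ => 2 * n) atTop atTop := tendsto_id.const_mul_atTop' two_pos
  have := (hq.comp l3).div ((hq.comp l1).mul (hq.comp l2)) (mul_ne_zero h0 h0)
  rw [div_mul_cancel_left₀ h0] at this
  refine this.congr' (eventually_atTop.2 ⟨j.natAbs, fun n hn => ?_⟩)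
  change _ = cc p n j
  rw [cc, if_pos (by omega)]
  rfl

lemma cc_bound {p : ℂ} (hp : ‖p‖ < 1) : ∃ C : ℝ, ∀ n j, ‖cc p n j‖ ≤ C := by
  have hq : Tendsto (qf p) atTop (𝓝 (qp p p)) := qp_tendsto hp p
  obtain ⟨A, hA⟩ := (Metric.isBounded_range_of_tendsto _ hq).exists_norm_le
  obtain ⟨B, hB⟩ := (Metric.isBounded_range_of_tendsto _
    (hq.inv₀ (qp_ne_zero hp hp))).exists_norm_le
  have hA' : ∀ n, ‖qf p n‖ ≤ A := fun n => hA _ ⟨n, rfl⟩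
  have hB' : ∀ n, ‖(qf p n)⁻¹‖ ≤ B := fun n => hB _ ⟨n, rfl⟩
  have hA0 : 0 ≤ A := (norm_nonneg _).trans (hA' 0)
  have hB0 : 0 ≤ B := (norm_nonneg _).trans (hB' 0)
  refine ⟨A * (B * B), fun n j => ?_⟩
  unfold cc
  split_ifs
  · rw [div_eq_mul_inv, mul_inv, norm_mul, norm_mul]
    gcongr
    exacts [hA' _, hB' _, hB' _]
  · simp only [norm_zero]; positivity

/-- The Jacobi triple product identity, obtained from `finite_jtp_tsum` by dominated
convergence. -/
lemma jtp {t z : ℂ} (ht0 : t ≠ 0) (ht : ‖t‖ < 1) (hz : z ≠ 0) :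
    J t z = qp z (t ^ 2) * qp (t ^ 2 / z) (t ^ 2) * qp (t ^ 2) (t ^ 2) := by
  have ht2 := norm_pow_lt_one ht two_ne_zero
  obtain ⟨C, hC⟩ := cc_bound ht2
  have h1 := tendsto_tsum_of_dominated_convergence (𝓕 := atTop)
    (f := fun n j => cc (t ^ 2) n j * (t ^ (j * j - j) * (-z) ^ j))
    (g := fun j => (qp (t ^ 2) (t ^ 2))⁻¹ * (t ^ (j * j - j) * (-z) ^ j))
    ((J_summable ht0 ht hz).norm.mul_left C)
    (fun j => (cc_tendsto ht2 j).mul_const _)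
    (Eventually.of_forall fun n j => by
      rw [norm_mul]
      exact mul_le_mul_of_nonneg_right (hC n j) (norm_nonneg _))
  have h2 := (qp_tendsto ht2 z).mul (qp_tendsto ht2 (t ^ 2 / z))
  have h3 := tendsto_nhds_unique (h2.congr fun n => finite_jtp_tsum ht0 hz ht2 n) h1
  rw [tsum_mul_left] at h3
  rw [h3, J]
  field_simp [qp_ne_zero ht2 ht2]

/-! ### The three-term relation -/

lemma J_reflect {t z : ℂ} (ht0 : t ≠ 0) (ht : ‖t‖ < 1) (hz : z ≠ 0) :
    J t (t ^ 2 / z) = J t z := by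
  have h2 : t ^ 2 ≠ 0 := pow_ne_zero 2 ht0
  rw [jtp ht0 ht hz, jtp ht0 ht (div_ne_zero h2 hz), div_div_cancel₀ h2]
  ring

lemma J_shift {t z : ℂ} (ht0 : t ≠ 0) (hz : z ≠ 0) : J t z = -z * J t (t ^ 2 * z) := by
  have hz' := neg_ne_zero.2 hz
  unfold J
  rw [← (Equiv.addRight (1 : ℤ)).tsum_eq, ← tsum_mul_left]
  refine tsum_congr fun n => ?_
  have e1 : (-(t ^ 2 * z)) ^ n = t ^ (2 * n) * (-z) ^ n := by
    rw [neg_mul_eq_mul_neg, mul_zpow, zpow_mul]; rfl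
  have e2 : t ^ ((n + 1) * (n + 1) - (n + 1)) = t ^ (n * n - n) * t ^ (2 * n) := by
    rw [← zpow_add₀ ht0]; congr 1; ring
  rw [Equiv.coe_addRight, e1, e2, zpow_add_one₀ hz']
  ring

/-- The even theta series `∑ₙ t^(2n²) y^(2n)`. -/
noncomputable def thE (t y : ℂ) : ℂ := ∑' n : ℤ, t ^ (2 * (n * n)) * y ^ (2 * n)

/-- The odd theta series `∑ₙ t^(2n² + 2n) y^(2n + 1)`. -/
noncomputable def thO (t y : ℂ) : ℂ := ∑' n : ℤ, t ^ (2 * (n * n + n)) * y ^ (2 * n + 1)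

lemma thE_summable {t y : ℂ} (ht0 : t ≠ 0) (ht : ‖t‖ < 1) (hy : y ≠ 0) :
    Summable fun n : ℤ => t ^ (2 * (n * n)) * y ^ (2 * n) := by
  refine (summable_theta (pow_ne_zero 2 ht0) (norm_pow_lt_one ht two_ne_zero)
    (pow_ne_zero 2 hy)).congr fun n => ?_
  rw [zpow_mul t, zpow_mul y]; rfl

lemma thO_summable {t y : ℂ} (ht0 : t ≠ 0) (ht : ‖t‖ < 1) (hy : y ≠ 0) :
    Summable fun n : ℤ => t ^ (2 * (n * n + n)) * y ^ (2 * n + 1) := by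
  refine ((summable_theta (pow_ne_zero 2 ht0) (norm_pow_lt_one ht two_ne_zero)
    (pow_ne_zero 2 (mul_ne_zero ht0 hy))).mul_right y).congr fun n => ?_
  rw [mul_add, zpow_add₀ ht0, zpow_add_one₀ hy, zpow_mul t, zpow_mul t, zpow_mul y, mul_pow,
    mul_zpow]
  simp only [zpow_ofNat]
  ring

/-- The lattice `ℤ × ℤ` is split by the parity of the sum of the coordinates, and each half is
parametrized by half-sum and half-difference. -/
lemma hasSum_parity {F : ℤ × ℤ → ℂ} {α β : ℂ}
    (h₁ : HasSum (fun a : ℤ × ℤ => F (a.1 + 1 + a.2, a.1 + 1 - a.2)) α)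
    (h₂ : HasSum (fun a : ℤ × ℤ => F (a.1 + a.2 + 1, a.1 - a.2)) β) : HasSum F (α + β) := by
  let e₁ : ℤ × ℤ → ℤ × ℤ := fun a => (a.1 + 1 + a.2, a.1 + 1 - a.2)
  let e₂ : ℤ × ℤ → ℤ × ℤ := fun a => (a.1 + a.2 + 1, a.1 - a.2)
  have i₁ : Function.Injective e₁ := by
    rintro ⟨a, b⟩ ⟨c, d⟩ h
    simp only [e₁, Prod.mk.injEq] at h ⊢
    omega
  have i₂ : Function.Injective e₂ := by
    rintro ⟨a, b⟩ ⟨c, d⟩ h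
    simp only [e₂, Prod.mk.injEq] at h ⊢
    omega
  have hc : IsCompl (Set.range e₁) (Set.range e₂) := by
    constructor
    · rw [Set.disjoint_iff]
      rintro _ ⟨⟨⟨a, b⟩, rfl⟩, ⟨⟨c, d⟩, h⟩⟩
      simp only [e₁, e₂, Prod.mk.injEq] at h
      omega
    · rw [codisjoint_iff_le_sup]
      rintro ⟨m, n⟩ -
      rcases Int.emod_two_eq_zero_or_one (m + n) with h | h
      · exact Or.inl ⟨((m + n) / 2 - 1, (m - n) / 2), by
          simp only [e₁, Prod.mk.injEq]; omega⟩
      · exact Or.inr ⟨((m + n) / 2, (m - n) / 2), by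
          simp only [e₂, Prod.mk.injEq]; omega⟩
  exact HasSum.add_isCompl hc (i₁.hasSum_range_iff.2 h₁) (i₂.hasSum_range_iff.2 h₂)

lemma hasSum_mul_int {f g : ℤ → ℂ} (hf : Summable f) (hg : Summable g) :
    HasSum (fun a : ℤ × ℤ => f a.1 * g a.2) ((∑' n, f n) * ∑' n, g n) :=
  hf.hasSum.mul hg.hasSum (summable_mul_of_summable_norm hf.norm hg.norm)

/-- The product is summed over pairs `(m, n)`; the sum and difference of `m` and `n` have the same
parity, and each parity contributes one of the two terms. -/
lemma J_mul {t x y : ℂ} (ht0 : t ≠ 0) (ht : ‖t‖ < 1) (hx : x ≠ 0) (hy : y ≠ 0) :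
    J t (x * y) * J t (x / y) = x * (thO t x * thE t y - thE t x * thO t y) := by
  have s1 := J_summable ht0 ht (mul_ne_zero hx hy)
  have s2 := J_summable ht0 ht (div_ne_zero hx hy)
  have hsplit : ∀ m n : ℤ, t ^ (m * m - m) * (-(x * y)) ^ m * (t ^ (n * n - n) * (-(x / y)) ^ n) =
      (-1) ^ (m + n) * (t ^ (m * m - m + (n * n - n)) * (x ^ (m + n) * y ^ (m - n))) := by
    intro m n
    rw [neg_eq_neg_one_mul (x * y), neg_eq_neg_one_mul (x / y), mul_zpow, mul_zpow, mul_zpow,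
      div_zpow, zpow_add₀ (by norm_num : (-1 : ℂ) ≠ 0), zpow_add₀ ht0, zpow_add₀ hx,
      zpow_sub₀ hy]
    ring
  have hE := (hasSum_mul_int (thO_summable ht0 ht hx) (thE_summable ht0 ht hy)).mul_left x
  have hO := (hasSum_mul_int (thE_summable ht0 ht hx) (thO_summable ht0 ht hy)).mul_left (-x)
  have h₁ : ∀ a : ℤ × ℤ, t ^ ((a.1 + 1 + a.2) * (a.1 + 1 + a.2) - (a.1 + 1 + a.2)) *
      (-(x * y)) ^ (a.1 + 1 + a.2) * (t ^ ((a.1 + 1 - a.2) * (a.1 + 1 - a.2) - (a.1 + 1 - a.2)) *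
        (-(x / y)) ^ (a.1 + 1 - a.2)) = x * (t ^ (2 * (a.1 * a.1 + a.1)) * x ^ (2 * a.1 + 1) *
          (t ^ (2 * (a.2 * a.2)) * y ^ (2 * a.2))) := by
    rintro ⟨a, b⟩
    have e1 : t ^ ((a + 1 + b) * (a + 1 + b) - (a + 1 + b) +
        ((a + 1 - b) * (a + 1 - b) - (a + 1 - b))) =
        t ^ (2 * (a * a + a)) * t ^ (2 * (b * b)) := by
      rw [← zpow_add₀ ht0]; ring_nf
    have e2 : x ^ (a + 1 + b + (a + 1 - b)) = x ^ (2 * a + 1) * x := by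
      rw [← zpow_add_one₀ hx]; ring_nf
    have e3 : a + 1 + b - (a + 1 - b) = 2 * b := by ring
    rw [hsplit, Even.neg_one_zpow ⟨a + 1, by ring⟩, e1, e2, e3]
    ring
  have h₂ : ∀ a : ℤ × ℤ, t ^ ((a.1 + a.2 + 1) * (a.1 + a.2 + 1) - (a.1 + a.2 + 1)) *
      (-(x * y)) ^ (a.1 + a.2 + 1) * (t ^ ((a.1 - a.2) * (a.1 - a.2) - (a.1 - a.2)) *
        (-(x / y)) ^ (a.1 - a.2)) = -x * (t ^ (2 * (a.1 * a.1)) * x ^ (2 * a.1) *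
          (t ^ (2 * (a.2 * a.2 + a.2)) * y ^ (2 * a.2 + 1))) := by
    rintro ⟨a, b⟩
    have e1 : t ^ ((a + b + 1) * (a + b + 1) - (a + b + 1) + ((a - b) * (a - b) - (a - b))) =
        t ^ (2 * (a * a)) * t ^ (2 * (b * b + b)) := by
      rw [← zpow_add₀ ht0]; ring_nf
    have e2 : x ^ (a + b + 1 + (a - b)) = x ^ (2 * a) * x := by
      rw [← zpow_add_one₀ hx]; ring_nf
    have e3 : a + b + 1 - (a - b) = 2 * b + 1 := by ring
    rw [hsplit, Odd.neg_one_zpow ⟨a, by ring⟩, e1, e2, e3]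
    ring
  have hf := hasSum_mul_int s1 s2
  have key := hf.unique (hasSum_parity
    (F := fun a => t ^ (a.1 * a.1 - a.1) * (-(x * y)) ^ a.1 *
      (t ^ (a.2 * a.2 - a.2) * (-(x / y)) ^ a.2)) (hE.congr_fun h₁) (hO.congr_fun h₂))
  unfold J thE thO
  linear_combination key

/-- The three-term relation of Weierstrass: by `J_mul`, it is the Plücker relation between the
`2 × 2` minors of the matrix with columns `(thO t w, thE t w)`, for `w = x, y, u, v`. -/
lemma J_three_term {t x y u v : ℂ} (ht0 : t ≠ 0) (ht : ‖t‖ < 1) (hx : x ≠ 0) (hy : y ≠ 0)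
    (hu : u ≠ 0) (hv : v ≠ 0) :
    J t (x * y) * J t (x / y) * (J t (u * v) * J t (u / v)) -
      J t (x * v) * J t (x / v) * (J t (u * y) * J t (u / y)) =
    u / y * (J t (x * u) * J t (x / u)) * (J t (y * v) * J t (y / v)) := by
  rw [J_mul ht0 ht hx hy, J_mul ht0 ht hu hv, J_mul ht0 ht hx hv, J_mul ht0 ht hu hy,
    J_mul ht0 ht hx hu, J_mul ht0 ht hy hv]
  field_simp
  ring

/-! ### The two level-ten relations -/

/-- In product form: `ψ(q)² / ψ(q⁵)² - q = J₅² / (J₁ J₃)`, where `Jᵢ = J (q⁵) (qⁱ)`. -/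
lemma rel_one {q : ℂ} (hq0 : q ≠ 0) (hq : ‖q‖ < 1) :
    J (q ^ 5) (q ^ 2) ^ 2 * J (q ^ 5) (q ^ 4) ^ 2 - q * J (q ^ 5) q ^ 2 * J (q ^ 5) (q ^ 3) ^ 2 =
      J (q ^ 5) q * J (q ^ 5) (q ^ 3) * J (q ^ 5) (q ^ 5) ^ 2 := by
  have ht0 : q ^ 5 ≠ 0 := pow_ne_zero 5 hq0
  have ht : ‖q ^ 5‖ < 1 := norm_pow_lt_one hq (by norm_num)
  have h := J_three_term (x := q ^ 3) (y := q⁻¹) (u := q ^ 8) (v := q ^ 4) ht0 ht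
    (by positivity) (by positivity) (by positivity) (by positivity)
  rw [show q ^ 3 * q⁻¹ = q ^ 2 by field_simp, show q ^ 3 / q⁻¹ = q ^ 4 by field_simp,
    show q ^ 8 * q ^ 4 = (q ^ 5) ^ 2 * q ^ 2 by ring, show q ^ 8 / q ^ 4 = q ^ 4 by field_simp,
    show q ^ 3 * q ^ 4 = (q ^ 5) ^ 2 / q ^ 3 by field_simp, show q ^ 3 / q ^ 4 = q⁻¹ by field_simp,
    show q ^ 8 * q⁻¹ = (q ^ 5) ^ 2 / q ^ 3 by field_simp,
    show q ^ 8 / q⁻¹ = (q ^ 5) ^ 2 / q by field_simp,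
    show q ^ 3 * q ^ 8 = (q ^ 5) ^ 2 * q by ring, show q ^ 3 / q ^ 8 = (q ^ 5)⁻¹ by field_simp,
    show q⁻¹ * q ^ 4 = q ^ 3 by field_simp, show q⁻¹ / q ^ 4 = (q ^ 5)⁻¹ by field_simp,
    J_reflect ht0 ht hq0, J_reflect ht0 ht (pow_ne_zero 3 hq0),
    J_shift (z := q⁻¹) ht0 (inv_ne_zero hq0), J_shift (z := (q ^ 5)⁻¹) ht0 (inv_ne_zero ht0),
    show (q ^ 5) ^ 2 * q⁻¹ = (q ^ 5) ^ 2 / q by field_simp,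
    show (q ^ 5) ^ 2 * (q ^ 5)⁻¹ = q ^ 5 by field_simp, J_reflect ht0 ht hq0] at h
  have h2 := J_shift (z := q ^ 2) ht0 (pow_ne_zero 2 hq0)
  have h1 := J_shift (z := q) ht0 hq0
  generalize J (q ^ 5) ((q ^ 5) ^ 2 * q ^ 2) = j12 at h h2
  generalize J (q ^ 5) ((q ^ 5) ^ 2 * q) = j11 at h h1
  generalize J (q ^ 5) (q ^ 2) = j2 at *
  generalize J (q ^ 5) (q ^ 4) = j4 at *
  generalize J (q ^ 5) (q ^ 3) = j3 at *
  generalize J (q ^ 5) (q ^ 5) = j5 at *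
  generalize J (q ^ 5) q = j1 at *
  subst h2 h1
  field_simp at h
  linear_combination -q * h

/-- In product form: `1/k - k = J₅² / (q J₁ J₃)`, where `Jᵢ = J (q⁵) (qⁱ)` and
`k = q J₁ J₂ / (J₃ J₄)`. -/
lemma rel_two {q : ℂ} (hq0 : q ≠ 0) (hq : ‖q‖ < 1) :
    J (q ^ 5) (q ^ 3) ^ 2 * J (q ^ 5) (q ^ 4) ^ 2 -
      q ^ 2 * J (q ^ 5) q ^ 2 * J (q ^ 5) (q ^ 2) ^ 2 =
      J (q ^ 5) (q ^ 2) * J (q ^ 5) (q ^ 4) * J (q ^ 5) (q ^ 5) ^ 2 := by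
  have ht0 : q ^ 5 ≠ 0 := pow_ne_zero 5 hq0
  have ht : ‖q ^ 5‖ < 1 := norm_pow_lt_one hq (by norm_num)
  -- the arguments of the three-term relation are half-integral powers of `q`
  obtain ⟨s, hs⟩ := IsAlgClosed.exists_pow_nat_eq q two_pos
  have hs0 : s ≠ 0 := by rintro rfl; simp at hs; exact hq0 hs.symm
  have h := J_three_term (x := s ^ 7) (y := s⁻¹) (u := s ^ 17) (v := s ^ 9) ht0 ht
    (by positivity) (by positivity) (by positivity) (by positivity)
  rw [show s ^ 7 * s⁻¹ = q ^ 3 by rw [← hs]; field_simp,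
    show s ^ 7 / s⁻¹ = q ^ 4 by rw [← hs]; field_simp,
    show s ^ 17 * s ^ 9 = (q ^ 5) ^ 2 * q ^ 3 by rw [← hs]; ring,
    show s ^ 17 / s ^ 9 = q ^ 4 by rw [← hs]; field_simp,
    show s ^ 7 * s ^ 9 = (q ^ 5) ^ 2 / q ^ 2 by rw [← hs]; field_simp,
    show s ^ 7 / s ^ 9 = q⁻¹ by rw [← hs]; field_simp,
    show s ^ 17 * s⁻¹ = (q ^ 5) ^ 2 / q ^ 2 by rw [← hs]; field_simp,
    show s ^ 17 / s⁻¹ = (q ^ 5) ^ 2 / q by rw [← hs]; field_simp,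
    show s ^ 7 * s ^ 17 = (q ^ 5) ^ 2 * q ^ 2 by rw [← hs]; ring,
    show s ^ 7 / s ^ 17 = (q ^ 5)⁻¹ by rw [← hs]; field_simp,
    show s⁻¹ * s ^ 9 = q ^ 4 by rw [← hs]; field_simp,
    show s⁻¹ / s ^ 9 = (q ^ 5)⁻¹ by rw [← hs]; field_simp,
    J_reflect ht0 ht hq0, J_reflect ht0 ht (pow_ne_zero 2 hq0),
    J_shift (z := q⁻¹) ht0 (inv_ne_zero hq0), J_shift (z := (q ^ 5)⁻¹) ht0 (inv_ne_zero ht0),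
    show (q ^ 5) ^ 2 * q⁻¹ = (q ^ 5) ^ 2 / q by field_simp,
    show (q ^ 5) ^ 2 * (q ^ 5)⁻¹ = q ^ 5 by field_simp, J_reflect ht0 ht hq0] at h
  have h2 := J_shift (z := q ^ 2) ht0 (pow_ne_zero 2 hq0)
  have h3 := J_shift (z := q ^ 3) ht0 (pow_ne_zero 3 hq0)
  generalize J (q ^ 5) ((q ^ 5) ^ 2 * q ^ 2) = j12 at h h2
  generalize J (q ^ 5) ((q ^ 5) ^ 2 * q ^ 3) = j13 at h h3
  generalize J (q ^ 5) (q ^ 2) = j2 at *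
  generalize J (q ^ 5) (q ^ 4) = j4 at *
  generalize J (q ^ 5) (q ^ 3) = j3 at *
  generalize J (q ^ 5) (q ^ 5) = j5 at *
  generalize J (q ^ 5) q = j1 at *
  subst h2 h3
  field_simp at h
  linear_combination (-q ^ 2) * h

/-! ### The product for `ψ` -/

/-- The triangular numbers `n(n+1)/2`, `n ≥ 0`, are the numbers `2m² + m`, `m ∈ ℤ`: even `n`
corresponds to `m = n/2 ≥ 0` and odd `n` to `m = -(n+1)/2 < 0`. -/
lemma psi_eq_J {q : ℂ} (hq0 : q ≠ 0) (hq : ‖q‖ < 1) : psi q = J (q ^ 2) (-q ^ 3) := by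
  have hs := J_summable (pow_ne_zero 2 hq0) (norm_pow_lt_one hq two_ne_zero)
    (neg_ne_zero.2 (pow_ne_zero 3 hq0))
  have hterm : ∀ n : ℤ, (q ^ 2) ^ (n * n - n) * (- -q ^ 3) ^ n = q ^ (2 * (n * n) + n) := by
    intro n
    rw [neg_neg, ← zpow_natCast q 2, ← zpow_natCast q 3, ← zpow_mul, ← zpow_mul, ← zpow_add₀ hq0]
    congr 1; push_cast; ring
  unfold J
  simp only [hterm] at hs ⊢
  have he : ∀ n : ℕ, q ^ (2 * n * (2 * n + 1) / 2) = q ^ (2 * ((n : ℤ) * n) + n) := by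
    intro n
    rw [← zpow_natCast, show 2 * n * (2 * n + 1) / 2 = n * (2 * n + 1) by
      rw [mul_assoc, Nat.mul_div_cancel_left _ two_pos]]
    congr 1; push_cast; ring
  have ho : ∀ n : ℕ, q ^ ((2 * n + 1) * (2 * n + 1 + 1) / 2) =
      q ^ (2 * ((-((n : ℤ) + 1)) * (-((n : ℤ) + 1))) + -((n : ℤ) + 1)) := by
    intro n
    rw [← zpow_natCast, show (2 * n + 1) * (2 * n + 1 + 1) / 2 = (2 * n + 1) * (n + 1) by
      rw [show (2 * n + 1) * (2 * n + 1 + 1) = 2 * ((2 * n + 1) * (n + 1)) by ring,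
        Nat.mul_div_cancel_left _ two_pos]]
    congr 1; push_cast; ring
  have s1 : Summable fun n : ℕ => q ^ (2 * ((n : ℤ) * n) + n) :=
    hs.comp_injective (i := fun n : ℕ => (n : ℤ)) Nat.cast_injective
  have s2 : Summable fun n : ℕ =>
      q ^ (2 * ((-((n : ℤ) + 1)) * (-((n : ℤ) + 1))) + -((n : ℤ) + 1)) :=
    hs.comp_injective (i := fun n : ℕ => -((n : ℤ) + 1)) fun a b h => by simpa using h
  rw [psi, tsum_of_nat_of_neg_add_one (f := fun n : ℤ => q ^ (2 * (n * n) + n)) s1 s2]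
  rw [← tsum_even_add_odd (f := fun n : ℕ => q ^ (n * (n + 1) / 2))
    (s1.congr fun n => (he n).symm) (s2.congr fun n => (ho n).symm)]
  simp only [he, ho]

/-- Gauss's product `ψ(q) = (q²; q²)_∞ / (q; q²)_∞`. -/
lemma psi_product {q : ℂ} (hq0 : q ≠ 0) (hq : ‖q‖ < 1) :
    psi q * qp q (q ^ 2) = qp (q ^ 2) (q ^ 2) := by
  have h2 := norm_pow_lt_one hq two_ne_zero
  have h4 := norm_pow_lt_one hq (n := 4) (by norm_num)
  have e1 := qp_two h2 q
  have e2 := qp_two h2 (q ^ 2)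
  have e3 := qp_two h4 (q ^ 2)
  have e4 := qp_mul_qp_neg h4 q
  have e5 := qp_mul_qp_neg h4 (q ^ 3)
  rw [psi_eq_J hq0 hq, jtp (pow_ne_zero 2 hq0) h2 (neg_ne_zero.2 (pow_ne_zero 3 hq0)),
    show (q ^ 2) ^ 2 / -q ^ 3 = -q by field_simp, e1, e2]
  rw [show q * q ^ 2 = q ^ 3 by ring, show q ^ 2 * q ^ 2 = q ^ 4 by ring,
    show (q ^ 2) ^ 2 = q ^ 4 by ring, e3, show q ^ 2 * q ^ 4 = (q ^ 3) ^ 2 by ring, ← e4, ← e5]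
  ring

/-! ### The identity -/

theorem stmt7 (q : ℂ) (hq0 : 0 < ‖q‖) (hq : ‖q‖ < 1) :
    psi q ^ 2 / (q * psi (q ^ 5) ^ 2) =
      (1 + q * RR q * RR (q ^ 2) ^ 2 - (q * RR q * RR (q ^ 2) ^ 2) ^ 2) /
        (q * RR q * RR (q ^ 2) ^ 2) := by
  have h0 : q ≠ 0 := norm_pos_iff.1 hq0
  have h2 := norm_pow_lt_one hq two_ne_zero
  have h5 := norm_pow_lt_one hq (n := 5) (by norm_num)
  have h10 := norm_pow_lt_one hq (n := 10) (by norm_num)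
  have ha : ∀ i ≠ 0, qp (q ^ i) (q ^ 10) ≠ 0 := fun i hi =>
    qp_ne_zero h10 (norm_pow_lt_one hq hi)
  have hsplit : ∀ i, qp (q ^ i) (q ^ 5) = qp (q ^ i) (q ^ 10) * qp (q ^ (i + 5)) (q ^ 10) := by
    intro i
    rw [qp_two h5, ← pow_mul, ← pow_add]
  have hJ : ∀ i j, i + j = 10 → J (q ^ 5) (q ^ i) =
      qp (q ^ i) (q ^ 10) * qp (q ^ j) (q ^ 10) * qp (q ^ 10) (q ^ 10) := by
    intro i j hij
    rw [jtp (pow_ne_zero 5 h0) h5 (pow_ne_zero i h0), ← pow_mul,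
      show q ^ (5 * 2) / q ^ i = q ^ j by
        rw [div_eq_iff (pow_ne_zero i h0), ← pow_add, add_comm, hij]]
  have hR1 : RR q = qp (q ^ 1) (q ^ 10) * qp (q ^ 6) (q ^ 10) *
      (qp (q ^ 4) (q ^ 10) * qp (q ^ 9) (q ^ 10)) / (qp (q ^ 2) (q ^ 10) * qp (q ^ 7) (q ^ 10) *
      (qp (q ^ 3) (q ^ 10) * qp (q ^ 8) (q ^ 10))) := by
    have := hsplit 1
    rw [pow_one] at this
    rw [RR, this, hsplit 2, hsplit 3, hsplit 4, pow_one]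
  have hR2 : RR (q ^ 2) = qp (q ^ 2) (q ^ 10) * qp (q ^ 8) (q ^ 10) /
      (qp (q ^ 4) (q ^ 10) * qp (q ^ 6) (q ^ 10)) := by
    simp only [RR, ← pow_mul]
  have r1 := rel_one h0 hq
  have r2 := rel_two h0 hq
  have hJ1 := hJ 1 9 rfl
  rw [pow_one] at hJ1
  have hψ : psi q * (J (q ^ 5) q * J (q ^ 5) (q ^ 3)) =
      psi (q ^ 5) * (J (q ^ 5) (q ^ 2) * J (q ^ 5) (q ^ 4)) := by
    have p1 := psi_product h0 hq
    have p5 := psi_product (pow_ne_zero 5 h0) h5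
    have d1 := qp_five h2 q
    have d2 := qp_five h2 (q ^ 2)
    rw [d1, d2] at p1
    simp only [← pow_mul, ← pow_add, ← pow_succ'] at p1 p5
    norm_num only at p1 p5
    rw [hJ1, hJ 2 8 rfl, hJ 3 7 rfl, hJ 4 6 rfl]
    refine mul_right_cancel₀ (ha 5 (by norm_num)) ?_
    linear_combination (qp (q ^ 10) (q ^ 10) ^ 2) * p1 - (qp (q ^ 2) (q ^ 10) *
      qp (q ^ 8) (q ^ 10) * qp (q ^ 4) (q ^ 10) * qp (q ^ 6) (q ^ 10) * qp (q ^ 10) (q ^ 10) ^ 2) * p5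
  have hψ5 : psi (q ^ 5) ≠ 0 := fun h => by
    have p5 := psi_product (pow_ne_zero 5 h0) h5
    rw [h, zero_mul, ← pow_mul] at p5
    exact ha 10 (by norm_num) p5.symm
  have hk : q * RR q * RR (q ^ 2) ^ 2 =
      q * (J (q ^ 5) q * J (q ^ 5) (q ^ 2)) / (J (q ^ 5) (q ^ 3) * J (q ^ 5) (q ^ 4)) := by
    have a1 := ha 1 (by norm_num)
    have a2 := ha 2 (by norm_num)
    have a3 := ha 3 (by norm_num)
    have a4 := ha 4 (by norm_num)
    have a6 := ha 6 (by norm_num)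
    have a7 := ha 7 (by norm_num)
    have a8 := ha 8 (by norm_num)
    have a9 := ha 9 (by norm_num)
    have a10 := ha 10 (by norm_num)
    rw [hR1, hR2, hJ1, hJ 2 8 rfl, hJ 3 7 rfl, hJ 4 6 rfl, pow_one]
    field_simp
  have n1 : J (q ^ 5) q ≠ 0 := by
    have := ha 1 (by norm_num)
    rw [pow_one] at this
    rw [hJ1]
    exact mul_ne_zero (mul_ne_zero this (ha 9 (by norm_num))) (ha 10 (by norm_num))
  have hn : ∀ i j, i + j = 10 → i ≠ 0 → j ≠ 0 → J (q ^ 5) (q ^ i) ≠ 0 := fun i j h hi hj => by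
    rw [hJ i j h]
    exact mul_ne_zero (mul_ne_zero (ha i hi) (ha j hj)) (ha 10 (by norm_num))
  have n2 := hn 2 8 rfl (by norm_num) (by norm_num)
  have n3 := hn 3 7 rfl (by norm_num) (by norm_num)
  have n4 := hn 4 6 rfl (by norm_num) (by norm_num)
  rw [hk, show psi q = psi (q ^ 5) * (J (q ^ 5) (q ^ 2) * J (q ^ 5) (q ^ 4)) /
    (J (q ^ 5) q * J (q ^ 5) (q ^ 3)) from (eq_div_iff (mul_ne_zero n1 n3)).2 hψ]
  generalize J (q ^ 5) (q ^ 2) = j2 at *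
  generalize J (q ^ 5) (q ^ 4) = j4 at *
  generalize J (q ^ 5) (q ^ 3) = j3 at *
  generalize J (q ^ 5) (q ^ 5) = j5 at *
  generalize J (q ^ 5) q = j1 at *
  field_simp
  linear_combination j2 * j4 * r1 - j1 * j3 * r2
end

section
/- For |q|<1, φ(−q)^2 − φ(−q^5)^2 = −4q·(q;q)_∞·(q^{10};q^{10})_∞^3 / ((q^2;q^2)_∞·(q^5;q^5)_∞), where φ(q) = ∑_{n∈ℤ} q^{n^2}. -/
/-! ### The finite form of the Jacobi triple product -/

/-- The Gaussian binomial coefficient `[n, k]` in base `Q`, defined by the `Q`-Pascal rule. -/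
noncomputable def gaussBinom (Q : ℂ) : ℕ → ℕ → ℂ
  | _, 0 => 1
  | 0, _ + 1 => 0
  | n + 1, k + 1 => Q ^ (k + 1) * gaussBinom Q n (k + 1) + gaussBinom Q n k

/-- The finite product `(Q; Q)_n = (1 - Q)(1 - Q²)⋯(1 - Qⁿ)`. -/
noncomputable def qfac (Q : ℂ) (n : ℕ) : ℂ := ∏ k ∈ Finset.range n, (1 - Q * Q ^ k)

theorem gaussBinom_zero_right (Q : ℂ) (n : ℕ) : gaussBinom Q n 0 = 1 := by
  cases n <;> rfl

theorem gaussBinom_eq_zero (Q : ℂ) : ∀ {n k : ℕ}, n < k → gaussBinom Q n k = 0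
  | _, 0, h => absurd h (Nat.not_lt_zero _)
  | 0, _ + 1, _ => rfl
  | n + 1, k + 1, h => by
    rw [gaussBinom, gaussBinom_eq_zero Q (show n < k + 1 by lia),
      gaussBinom_eq_zero Q (show n < k by lia)]
    simp

theorem qfac_succ (Q : ℂ) (n : ℕ) : qfac Q (n + 1) = qfac Q n * (1 - Q ^ (n + 1)) := by
  rw [qfac, Finset.prod_range_succ, ← qfac, pow_succ' Q n]

theorem gaussBinom_self (Q : ℂ) : ∀ n : ℕ, gaussBinom Q n n = 1
  | 0 => rfl
  | n + 1 => by
    rw [gaussBinom, gaussBinom_eq_zero Q (Nat.lt_succ_self n), gaussBinom_self Q n]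
    simp

theorem gaussBinom_mul_qfac (Q : ℂ) (k l : ℕ) :
    gaussBinom Q (k + l) k * (qfac Q k * qfac Q l) = qfac Q (k + l) := by
  induction hs : k + l generalizing k l with
  | zero =>
    obtain ⟨rfl, rfl⟩ : k = 0 ∧ l = 0 := by lia
    simp [qfac, gaussBinom]
  | succ n ih =>
    rcases k with _ | k
    · obtain rfl : l = n + 1 := by lia
      simp [gaussBinom_zero_right, qfac]
    rcases l with _ | l
    · obtain rfl : k = n := by lia
      simp [gaussBinom_self, qfac]
    have h1 := ih (k + 1) l (by lia)
    have h2 := ih k (l + 1) (by lia)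
    obtain rfl : n = k + l + 1 := by lia
    rw [qfac_succ] at h1 h2
    rw [gaussBinom, qfac_succ, qfac_succ, qfac_succ]
    linear_combination Q ^ (k + 1) * (1 - Q ^ (l + 1)) * h1 + (1 - Q ^ (k + 1)) * h2

/-- The finite `q`-binomial theorem in base `s²`. -/
theorem prod_eq_sum_gaussBinom (s : ℂ) (N : ℕ) (z : ℂ) :
    ∏ k ∈ Finset.range N, (1 + z * s ^ (2 * k + 1)) =
      ∑ k ∈ Finset.range (N + 1), s ^ k ^ 2 * gaussBinom (s ^ 2) N k * z ^ k := by
  induction N generalizing z with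
  | zero => simp [gaussBinom]
  | succ N ih =>
    have e : ∏ k ∈ Finset.range (N + 1), (1 + z * s ^ (2 * k + 1)) =
        (1 + z * s) * ∏ k ∈ Finset.range N, (1 + (z * s ^ 2) * s ^ (2 * k + 1)) := by
      rw [Finset.prod_range_succ']
      simp only [Nat.mul_zero, zero_add, pow_one]
      rw [mul_comm]
      congr 1
      refine Finset.prod_congr rfl fun k _ => ?_
      ring
    rw [e, ih, add_mul, one_mul, Finset.sum_range_succ' _ (N + 1)]
    have h0 : ∑ k ∈ Finset.range (N + 1), s ^ k ^ 2 * gaussBinom (s ^ 2) N k * (z * s ^ 2) ^ k =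
        ∑ k ∈ Finset.range (N + 1),
          s ^ (k + 1) ^ 2 * gaussBinom (s ^ 2) N (k + 1) * (z * s ^ 2) ^ (k + 1) + 1 := by
      rw [Finset.sum_range_succ', Finset.sum_range_succ _ N,
        gaussBinom_eq_zero _ (Nat.lt_succ_self N)]
      simp [gaussBinom_zero_right]
    nth_rewrite 1 [h0]
    rw [Finset.mul_sum, add_right_comm, ← Finset.sum_add_distrib]
    congr 1
    · refine Finset.sum_congr rfl fun k _ => ?_
      rw [gaussBinom]
      ring
    · simp [gaussBinom_zero_right]

/-- The symmetric product with `2n` factors is, up to normalisation, the product of the finite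
`q`-binomial theorem evaluated at `z / s ^ (2n)`. -/
theorem symm_prod_mul_pow {s z : ℂ} (hs : s ≠ 0) (hz : z ≠ 0) (n : ℕ) :
    ((∏ k ∈ Finset.range n, (1 + z * s ^ (2 * k + 1))) *
        ∏ k ∈ Finset.range n, (1 + z⁻¹ * s ^ (2 * k + 1))) * z ^ n =
      s ^ n ^ 2 * ∏ k ∈ Finset.range (2 * n), (1 + z / s ^ (2 * n) * s ^ (2 * k + 1)) := by
  induction n with
  | zero => simp
  | succ n ih =>
    have e : ∏ k ∈ Finset.range (2 * (n + 1)), (1 + z / s ^ (2 * (n + 1)) * s ^ (2 * k + 1)) =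
        (1 + z / s ^ (2 * n + 1)) *
          (∏ k ∈ Finset.range (2 * n), (1 + z / s ^ (2 * n) * s ^ (2 * k + 1))) *
          (1 + z * s ^ (2 * n + 1)) := by
      rw [show 2 * (n + 1) = 2 * n + 1 + 1 by ring, Finset.prod_range_succ, Finset.prod_range_succ',
        mul_comm (∏ k ∈ Finset.range (2 * n), _)]
      congr 1
      · congr 1
        · field_simp
          ring
        · refine Finset.prod_congr rfl fun k _ => ?_
          field_simp
          ring
      · field_simp
        ring
    rw [e, Finset.prod_range_succ, Finset.prod_range_succ]
    have e2 : s ^ (2 * n + 1) * (1 + z / s ^ (2 * n + 1)) = z * (1 + z⁻¹ * s ^ (2 * n + 1)) := by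
      field_simp
      ring
    rw [show s ^ (n + 1) ^ 2 = s ^ n ^ 2 * s ^ (2 * n + 1) by rw [← pow_add]; congr 1; ring]
    linear_combination (1 + z * s ^ (2 * n + 1)) * z * (1 + z⁻¹ * s ^ (2 * n + 1)) * ih -
      (1 + z * s ^ (2 * n + 1)) * s ^ n ^ 2 *
        (∏ k ∈ Finset.range (2 * n), (1 + z / s ^ (2 * n) * s ^ (2 * k + 1))) * e2

/-! ### Infinite products -/

theorem one_sub_mul_pow_ne_zero {q : ℂ} (hq : ‖q‖ < 1) {m : ℕ} (hm : m ≠ 0) (k : ℕ) :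
    1 - q ^ m * (q ^ m) ^ k ≠ 0 := by
  intro h
  have h1 : q ^ (m * (k + 1)) = 1 := by
    rw [pow_mul, pow_succ']
    linear_combination -h
  have h2 : ‖q‖ ^ (m * (k + 1)) < 1 := pow_lt_one₀ (norm_nonneg _) hq (by positivity)
  rw [← norm_pow, h1, norm_one] at h2
  exact lt_irrefl _ h2

theorem summable_qp (a : ℂ) {q : ℂ} (hq : ‖q‖ < 1) : Summable fun k : ℕ => ‖-(a * q ^ k)‖ := by
  simp only [norm_neg, norm_mul, norm_pow]
  exact (summable_geometric_of_lt_one (norm_nonneg _) hq).mul_left _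

theorem tendsto_qp (a : ℂ) {q : ℂ} (hq : ‖q‖ < 1) :
    Filter.Tendsto (fun n => ∏ k ∈ Finset.range n, (1 - a * q ^ k)) Filter.atTop
      (nhds (qp a q)) := by
  have h := multipliable_one_add_of_summable (summable_qp a hq)
  simp only [← sub_eq_add_neg] at h
  exact h.hasProd.tendsto_prod_nat

theorem qp_ne_zero_s8 {a q : ℂ} (hq : ‖q‖ < 1) (h : ∀ k : ℕ, 1 - a * q ^ k ≠ 0) : qp a q ≠ 0 := by
  have := tprod_one_add_ne_zero_of_summable (f := fun k : ℕ => -(a * q ^ k))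
    (by simpa only [← sub_eq_add_neg] using h) (summable_qp a hq)
  rw [qp]
  simpa only [← sub_eq_add_neg] using this

theorem qp_self_ne_zero {q : ℂ} (hq : ‖q‖ < 1) : qp q q ≠ 0 :=
  qp_ne_zero_s8 hq fun k => by simpa using one_sub_mul_pow_ne_zero hq one_ne_zero k

theorem qfac_ne_zero {Q : ℂ} (hQ : ‖Q‖ < 1) (n : ℕ) : qfac Q n ≠ 0 :=
  Finset.prod_ne_zero_iff.2 fun k _ => by simpa using one_sub_mul_pow_ne_zero hQ one_ne_zero k

/-- Splitting `(a; q)_∞` according to the residue of the index modulo `m`. -/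
theorem qp_eq_prod (a : ℂ) {q : ℂ} (hq : ‖q‖ < 1) {m : ℕ} (hm : m ≠ 0) :
    qp a q = ∏ r ∈ Finset.range m, qp (a * q ^ r) (q ^ m) := by
  have hqm : ‖q ^ m‖ < 1 := by
    rw [norm_pow]
    exact pow_lt_one₀ (norm_nonneg _) hq hm
  have h1 : Filter.Tendsto (fun n => ∏ k ∈ Finset.range (m * n), (1 - a * q ^ k)) Filter.atTop
      (nhds (qp a q)) :=
    (tendsto_qp a hq).comp (Filter.tendsto_id.const_mul_atTop' (Nat.pos_of_ne_zero hm))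
  have h2 := tendsto_finsetProd (Finset.range m) fun r _ => tendsto_qp (a * q ^ r) hqm
  refine tendsto_nhds_unique h1 (h2.congr fun n => ?_)
  induction n with
  | zero => simp
  | succ n ih =>
    simp only [Finset.prod_range_succ _ n]
    rw [Finset.prod_mul_distrib, ih, mul_add, mul_one, Finset.prod_range_add]
    congr 1
    refine Finset.prod_congr rfl fun r _ => ?_
    ring

/-! ### The Jacobi triple product -/

/-- The coefficient of `s ^ j² z ^ j` in the symmetric product with `2n` factors:
the Gaussian binomial `[2n, n + j]`, written through `(Q; Q)_m`, and `0` for `|j| > n`. -/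
noncomputable def tripleCoeff (Q : ℂ) (n : ℕ) (j : ℤ) : ℂ :=
  if -(n : ℤ) ≤ j ∧ j ≤ n then
    qfac Q (2 * n) * (qfac Q (n + j).toNat)⁻¹ * (qfac Q (n - j).toNat)⁻¹ else 0

/-- The finite form of the Jacobi triple product, written as a sum over all of `ℤ` so that the
limit `n → ∞` can be taken termwise. -/
theorem symm_prod_eq_tsum {s z : ℂ} (hs : s ≠ 0) (hz : z ≠ 0) (hs1 : ‖s‖ < 1) (n : ℕ) :
    (∏ k ∈ Finset.range n, (1 + z * s ^ (2 * k + 1))) *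
        ∏ k ∈ Finset.range n, (1 + z⁻¹ * s ^ (2 * k + 1)) =
      ∑' j : ℤ, tripleCoeff (s ^ 2) n j * (s ^ (j ^ 2) * z ^ j) := by
  have hQ : ‖s ^ 2‖ < 1 := by
    rw [norm_pow]
    exact pow_lt_one₀ (norm_nonneg _) hs1 two_ne_zero
  have h := symm_prod_mul_pow hs hz n
  rw [prod_eq_sum_gaussBinom s (2 * n)] at h
  have hzn : z ^ n ≠ 0 := pow_ne_zero _ hz
  rw [eq_div_of_mul_eq hzn h, tsum_eq_sum (s := Finset.Icc (-(n : ℤ)) n), Finset.mul_sum,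
    Finset.sum_div]
  · refine Finset.sum_bij (fun k _ => (k : ℤ) - n) ?_ ?_ ?_ ?_
    · intro k hk
      simp only [Finset.mem_range, Finset.mem_Icc] at hk ⊢
      lia
    · intro a _ b _ h
      lia
    · intro j hj
      simp only [Finset.mem_range, Finset.mem_Icc] at hj ⊢
      exact ⟨(j + n).toNat, by lia, by lia⟩
    · intro k hk
      rw [Finset.mem_range] at hk
      obtain ⟨l, hl⟩ : ∃ l, 2 * n = k + l := ⟨2 * n - k, by lia⟩
      rw [tripleCoeff, if_pos (by lia), show ((n : ℤ) + (k - n)).toNat = k by lia,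
        show ((n : ℤ) - (k - n)).toNat = l by lia]
      have hg := gaussBinom_mul_qfac (s ^ 2) k l
      rw [← hl] at hg
      have hk0 := qfac_ne_zero hQ k
      have hl0 := qfac_ne_zero hQ l
      rw [← hg, zpow_sub₀ hz, zpow_natCast, zpow_natCast,
        show ((k : ℤ) - n) ^ 2 = ((k ^ 2 + n ^ 2 : ℕ) : ℤ) - ((2 * n * k : ℕ) : ℤ) by
          push_cast; ring,
        zpow_sub₀ hs, zpow_natCast, zpow_natCast, div_pow, ← pow_mul, pow_add]
      field_simp
  · intro j hj
    rw [Finset.mem_Icc] at hj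
    rw [tripleCoeff, if_neg hj, zero_mul]

/-- **Jacobi triple product identity**, for those `z` for which the theta series is known to
converge absolutely. -/
theorem jacobi_triple {s z : ℂ} (hs : s ≠ 0) (hz : z ≠ 0) (hs1 : ‖s‖ < 1)
    (hsum : Summable fun j : ℤ => ‖s ^ (j ^ 2) * z ^ j‖) :
    ∑' j : ℤ, s ^ (j ^ 2) * z ^ j =
      qp (-(z * s)) (s ^ 2) * qp (-(z⁻¹ * s)) (s ^ 2) * qp (s ^ 2) (s ^ 2) := by
  have hQ : ‖s ^ 2‖ < 1 := by
    rw [norm_pow]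
    exact pow_lt_one₀ (norm_nonneg _) hs1 two_ne_zero
  have hE : Filter.Tendsto (qfac (s ^ 2)) Filter.atTop (nhds (qp (s ^ 2) (s ^ 2))) :=
    tendsto_qp _ hQ
  have hE0 := qp_self_ne_zero hQ
  have hEi := hE.inv₀ hE0
  obtain ⟨M, hM⟩ := hE.norm.bddAbove_range
  obtain ⟨M', hM'⟩ := hEi.norm.bddAbove_range
  have hM1 : ∀ n, ‖qfac (s ^ 2) n‖ ≤ M := fun n => hM ⟨n, rfl⟩
  have hM2 : ∀ n, ‖(qfac (s ^ 2) n)⁻¹‖ ≤ M' := fun n => hM' ⟨n, rfl⟩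
  have hM0 : 0 ≤ M := (norm_nonneg _).trans (hM1 0)
  have hM0' : 0 ≤ M' := (norm_nonneg _).trans (hM2 0)
  have hR : Filter.Tendsto
      (fun n => ∑' j : ℤ, tripleCoeff (s ^ 2) n j * (s ^ (j ^ 2) * z ^ j)) Filter.atTop
      (nhds (∑' j : ℤ, (qp (s ^ 2) (s ^ 2))⁻¹ * (s ^ (j ^ 2) * z ^ j))) := by
    refine tendsto_tsum_of_dominated_convergence (hsum.mul_left (M * M' * M')) ?_ ?_
    · intro j
      refine Filter.Tendsto.mul_const _ ?_
      have t1 : Filter.Tendsto (fun n : ℕ => 2 * n) Filter.atTop Filter.atTop :=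
        Filter.tendsto_atTop_mono (fun n => show n ≤ 2 * n by lia) Filter.tendsto_id
      have t2 : Filter.Tendsto (fun n : ℕ => ((n : ℤ) + j).toNat) Filter.atTop Filter.atTop :=
        Filter.tendsto_atTop.2 fun b => by
          filter_upwards [Filter.eventually_ge_atTop (b + j.natAbs)] with n hn
          lia
      have t3 : Filter.Tendsto (fun n : ℕ => ((n : ℤ) - j).toNat) Filter.atTop Filter.atTop :=
        Filter.tendsto_atTop.2 fun b => by
          filter_upwards [Filter.eventually_ge_atTop (b + j.natAbs)] with n hn
          lia
      have := ((hE.comp t1).mul (hEi.comp t2)).mul (hEi.comp t3)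
      rw [mul_inv_cancel₀ hE0, one_mul] at this
      refine this.congr' ?_
      filter_upwards [Filter.eventually_ge_atTop j.natAbs] with n hn
      rw [tripleCoeff, if_pos (by lia)]
      rfl
    · refine Filter.Eventually.of_forall fun n j => ?_
      rw [norm_mul]
      refine mul_le_mul_of_nonneg_right ?_ (norm_nonneg _)
      rw [tripleCoeff]
      split_ifs
      · rw [norm_mul, norm_mul]
        gcongr
        exacts [hM1 _, hM2 _, hM2 _]
      · rw [norm_zero]
        positivity
  have hL := (tendsto_qp (-(z * s)) hQ).mul (tendsto_qp (-(z⁻¹ * s)) hQ)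
  have key := tendsto_nhds_unique hL (hR.congr fun n => by
    rw [← symm_prod_eq_tsum hs hz hs1]
    congr 1 <;> refine Finset.prod_congr rfl fun k _ => ?_ <;> ring)
  rw [key, tsum_mul_left]
  field_simp

/-! ### Splitting the Gaussian integers modulo `2 - i` -/

/-- The power of `p` indexed by the norm of the Gaussian integer `a + b i`. -/
noncomputable def normPow (p : ℂ) (z : ℤ × ℤ) : ℂ := p ^ (z.1.natAbs ^ 2 + z.2.natAbs ^ 2)

theorem normPow_eq_zpow (p : ℂ) (a b : ℤ) : normPow p (a, b) = p ^ (a ^ 2 + b ^ 2) := by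
  rw [normPow, ← zpow_natCast]
  congr 1
  push_cast
  simp

/-- A parametrisation of `ℤ[i]` by its residue classes modulo `2 - i`. The class `0` is
`(2 - i) w`, the class `1` is `((5m + 2) + (5n + 1) i) / (2 + i)`, and the classes `2, 4, 3`
arise from the class `1` by multiplication by `i, -1, -i`. -/
def classParam : Fin 5 × (ℤ × ℤ) → ℤ × ℤ
  | (0, (m, n)) => (2 * m + n, 2 * n - m)
  | (1, (m, n)) => (2 * m + n + 1, 2 * n - m)
  | (2, (m, n)) => (-(2 * n - m), 2 * m + n + 1)
  | (3, (m, n)) => (2 * n - m, -(2 * m + n + 1))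
  | (4, (m, n)) => (-(2 * m + n + 1), -(2 * n - m))

theorem classParam_bijective : Function.Bijective classParam := by
  constructor
  · rintro ⟨r, m, n⟩ ⟨r', m', n'⟩ h
    fin_cases r <;> fin_cases r' <;> simp [classParam] at h ⊢ <;> lia
  · rintro ⟨a, b⟩
    obtain ⟨t, ht⟩ : ∃ t, t = (a + 2 * b) / 5 := ⟨_, rfl⟩
    have h : (a + 2 * b) % 5 = 0 ∨ (a + 2 * b) % 5 = 1 ∨ (a + 2 * b) % 5 = 2 ∨
      (a + 2 * b) % 5 = 3 ∨ (a + 2 * b) % 5 = 4 := by lia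
    -- In each class the preimage is found by multiplying by `2 + i` and dividing by `5`.
    rcases h with h | h | h | h | h
    · exact ⟨(0, (2 * a - b) / 5, (a + 2 * b) / 5), by simp [classParam]; lia⟩
    · exact ⟨(1, (2 * (a - 1) - b) / 5, ((a - 1) + 2 * b) / 5), by simp [classParam]; lia⟩
    · exact ⟨(2, (2 * (b - 1) + a) / 5, ((b - 1) - 2 * a) / 5), by simp [classParam]; lia⟩
    · exact ⟨(3, (2 * (-b - 1) - a) / 5, ((-b - 1) + 2 * a) / 5), by simp [classParam]; lia⟩
    · exact ⟨(4, (2 * (-a - 1) + b) / 5, ((-a - 1) - 2 * b) / 5), by simp [classParam]; lia⟩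

theorem normPow_classParam_zero (p : ℂ) (z : ℤ × ℤ) :
    normPow p (classParam (0, z)) = normPow (p ^ 5) z := by
  obtain ⟨m, n⟩ := z
  rw [classParam, normPow_eq_zpow, normPow_eq_zpow, ← zpow_natCast, ← zpow_mul]
  congr 1
  push_cast
  ring

theorem normPow_classParam_ne_zero {p : ℂ} (hp : p ≠ 0) {r : Fin 5} (hr : r ≠ 0) (z : ℤ × ℤ) :
    normPow p (classParam (r, z)) =
      p * (p ^ (5 * z.1 ^ 2 + 4 * z.1) * p ^ (5 * z.2 ^ 2 + 2 * z.2)) := by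
  obtain ⟨m, n⟩ := z
  rw [← zpow_add₀ hp, ← zpow_one_add₀ hp]
  fin_cases r
  · exact absurd rfl hr
  all_goals
    simp only [classParam]
    rw [normPow_eq_zpow]
    congr 1
    ring

theorem summable_norm_zpow {p : ℂ} (hp1 : ‖p‖ < 1) {e : ℤ → ℤ} (he : ∀ j, |j| ≤ e j) :
    Summable fun j : ℤ => ‖p ^ e j‖ := by
  have h1 : Summable fun j : ℤ => ‖p‖ ^ j.natAbs := by
    have := summable_geometric_of_lt_one (norm_nonneg p) hp1
    exact Summable.of_nat_of_neg (by simpa using this) (by simpa using this)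
  refine h1.of_nonneg_of_le (fun _ => norm_nonneg _) fun j => ?_
  have h2 := he j
  rw [Int.abs_eq_natAbs] at h2
  rw [show e j = ((e j).toNat : ℤ) by lia, zpow_natCast, norm_pow]
  exact pow_le_pow_of_le_one (norm_nonneg _) hp1.le (by lia)

theorem abs_le_five_sq {c : ℤ} (hc : |c| ≤ 4) (j : ℤ) : |j| ≤ 5 * j ^ 2 + c * j := by
  have h1 : |j| ≤ j ^ 2 := by
    rw [← sq_abs]
    rcases (abs_nonneg j).eq_or_lt with h | h
    · rw [← h]; simp
    · nlinarith
  have h2 : |c * j| ≤ 4 * |j| := by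
    rw [abs_mul]
    exact mul_le_mul_of_nonneg_right hc (abs_nonneg _)
  have h3 := neg_abs_le (c * j)
  linarith

theorem summable_phi {p : ℂ} (hp1 : ‖p‖ < 1) : Summable fun n : ℤ => ‖p ^ n.natAbs ^ 2‖ := by
  have := summable_norm_zpow hp1 (e := fun j => j ^ 2) fun j => by
    rw [← sq_abs]
    rcases (abs_nonneg j).eq_or_lt with h | h
    · rw [← h]; simp
    · nlinarith
  refine this.congr fun n => ?_
  rw [← zpow_natCast]
  simp

theorem hasSum_phi_sq {p : ℂ} (hp1 : ‖p‖ < 1) : HasSum (normPow p) (phi p ^ 2) := by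
  have h := summable_phi hp1
  have e : normPow p = fun z : ℤ × ℤ => p ^ z.1.natAbs ^ 2 * p ^ z.2.natAbs ^ 2 := by
    funext z
    rw [normPow, pow_add]
  rw [e, sq, phi, tsum_mul_tsum_of_summable_norm h h]
  exact (summable_mul_of_summable_norm h h).hasSum

/-- The quintic splitting `φ(p)² - φ(p⁵)² = 4 p f(p, p⁹) f(p³, p⁷)`: the Gaussian integers not
divisible by `2 - i` form four residue classes, permuted transitively by the units. -/
theorem phi_sq_sub {p : ℂ} (hp : p ≠ 0) (hp1 : ‖p‖ < 1) :
    phi p ^ 2 - phi (p ^ 5) ^ 2 =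
      4 * p * ((∑' j : ℤ, p ^ (5 * j ^ 2 + 4 * j)) * ∑' j : ℤ, p ^ (5 * j ^ 2 + 2 * j)) := by
  have hp5 : ‖p ^ 5‖ < 1 := by
    rw [norm_pow]
    exact pow_lt_one₀ (norm_nonneg _) hp1 (by norm_num)
  have s4 := summable_norm_zpow hp1 (abs_le_five_sq (c := 4) (by norm_num))
  have s2 := summable_norm_zpow hp1 (abs_le_five_sq (c := 2) (by norm_num))
  have hA := ((Equiv.ofBijective _ classParam_bijective).hasSum_iff).2 (hasSum_phi_sq hp1)
  have hS := (summable_mul_of_summable_norm s4 s2).hasSum.mul_left p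
  rw [← tsum_mul_tsum_of_summable_norm s4 s2] at hS
  set S := p * ((∑' j : ℤ, p ^ (5 * j ^ 2 + 4 * j)) * ∑' j : ℤ, p ^ (5 * j ^ 2 + 2 * j)) with hSd
  have hB := hA.prod_fiberwise (g := fun r : Fin 5 => if r = 0 then phi (p ^ 5) ^ 2 else S)
    fun r => by
      by_cases hr : r = 0
      · subst hr
        simpa [Function.comp_def, normPow_classParam_zero] using hasSum_phi_sq hp5
      · simpa [Function.comp_def, normPow_classParam_ne_zero hp hr, hr] using hS
  have hC := hB.unique (hasSum_fintype _)
  simp [Fin.sum_univ_five] at hC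
  linear_combination hC

/-- The Jacobi triple product for `f(p^(5+c), p^(5-c))`, with base `s = p⁵` and `z = p^c`. -/
theorem theta_factor {p : ℂ} (hp : p ≠ 0) (hp1 : ‖p‖ < 1) {c : ℕ} (hc : c ≤ 4) :
    ∑' j : ℤ, p ^ (5 * j ^ 2 + c * j) =
      qp (-p ^ (5 + c)) (p ^ 10) * qp (-p ^ (5 - c)) (p ^ 10) * qp (p ^ 10) (p ^ 10) := by
  have e : ∀ j : ℤ, (p ^ 5) ^ (j ^ 2) * (p ^ c) ^ j = p ^ (5 * j ^ 2 + c * j) := fun j => by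
    rw [zpow_add₀ hp, ← zpow_natCast p 5, ← zpow_natCast p c, ← zpow_mul, ← zpow_mul]
    rfl
  have hp5 : ‖p ^ 5‖ < 1 := by
    rw [norm_pow]
    exact pow_lt_one₀ (norm_nonneg _) hp1 (by norm_num)
  have hs := summable_norm_zpow hp1 (abs_le_five_sq (c := c) (by rw [abs_le]; lia))
  have h := jacobi_triple (pow_ne_zero 5 hp) (pow_ne_zero c hp) hp5 (by simpa only [e] using hs)
  simp only [e] at h
  rw [h, ← pow_mul, ← pow_add, add_comm c 5, pow_sub₀ p hp (by lia : c ≤ 5),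
    mul_comm (p ^ c)⁻¹]

/-! ### Conversion of the theta product into the eta quotient -/

theorem stmt8 (q : ℂ) (hq : ‖q‖ < 1) :
    phi (-q) ^ 2 - phi (-(q ^ 5)) ^ 2 =
      -(4 * q * qp q q * qp (q ^ 10) (q ^ 10) ^ 3) /
        (qp (q ^ 2) (q ^ 2) * qp (q ^ 5) (q ^ 5)) := by
  rcases eq_or_ne q 0 with rfl | hq0
  · simp
  have hn : ∀ m : ℕ, m ≠ 0 → ‖q ^ m‖ < 1 := fun m hm => by
    rw [norm_pow]
    exact pow_lt_one₀ (norm_nonneg _) hq hm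
  have h1 := phi_sq_sub (neg_ne_zero.2 hq0) (by rwa [norm_neg])
  have h4 := theta_factor (neg_ne_zero.2 hq0) (by rwa [norm_neg]) (c := 4) (by norm_num)
  have h2 := theta_factor (neg_ne_zero.2 hq0) (by rwa [norm_neg]) (c := 2) (by norm_num)
  have o5 : (-q) ^ 5 = -q ^ 5 := Odd.neg_pow (by decide) q
  have e4 : -(-q) ^ (5 + 4) = q ^ 9 := by ring
  have e4' : -(-q) ^ (5 - 4) = q := by ring
  have e2 : -(-q) ^ (5 + 2) = q ^ 7 := by ring
  have e2' : -(-q) ^ (5 - 2) = q ^ 3 := by ring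
  have e10 : (-q) ^ 10 = q ^ 10 := by ring
  rw [e4, e4', e10] at h4
  rw [e2, e2', e10] at h2
  push_cast at h4 h2
  rw [o5, h4, h2] at h1
  rw [h1]
  -- `(q; q) = (q; q²) (q²; q²)`
  have d1 : qp q q = qp q (q ^ 2) * qp (q ^ 2) (q ^ 2) := by
    rw [qp_eq_prod q hq two_ne_zero]
    simp [Finset.prod_range_succ, sq]
  -- `(q⁵; q⁵) = (q⁵; q¹⁰) (q¹⁰; q¹⁰)`
  have d2 : qp (q ^ 5) (q ^ 5) = qp (q ^ 5) (q ^ 10) * qp (q ^ 10) (q ^ 10) := by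
    rw [qp_eq_prod _ (hn 5 (by norm_num)) two_ne_zero]
    simp [Finset.prod_range_succ, ← pow_mul, ← pow_add]
  -- `(q; q²) = (q; q¹⁰) (q³; q¹⁰) (q⁵; q¹⁰) (q⁷; q¹⁰) (q⁹; q¹⁰)`
  have d3 : qp q (q ^ 2) = qp q (q ^ 10) * qp (q ^ 3) (q ^ 10) * qp (q ^ 5) (q ^ 10) *
      qp (q ^ 7) (q ^ 10) * qp (q ^ 9) (q ^ 10) := by
    rw [qp_eq_prod _ (hn 2 (by norm_num)) (show 5 ≠ 0 by norm_num)]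
    simp [Finset.prod_range_succ, ← pow_mul, ← pow_succ']
  have n2 := qp_self_ne_zero (hn 2 (by norm_num))
  have n5 := qp_self_ne_zero (hn 5 (by norm_num))
  rw [eq_div_iff (mul_ne_zero n2 n5), d1, d3, d2]
  ring
end
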